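/- For n ≥ 0, A_{2n+2}(p,q) = (1+p)·(1+pq)^n · A_{2n+2}(0, (p+q)/(1+pq)) as an identity of rational functions. -/

import Mathlib

open Finset

/-- The set of (0-based) descent indices of a permutation of `Fin n`:
`i` is a descent index if `π i > π (i+1)` (so the 1-based descent position is `i+1`). -/
def descentSet {n : ℕ} (π : Equiv.Perm (Fin n)) : Finset ℕ :=
  (Finset.range n).filter
    (fun i => ∃ h : i + 1 < n, π ⟨i + 1, h⟩ < π ⟨i, Nat.lt_of_succ_lt h⟩)

/-- The number of descents of `π`. -/
def des {n : ℕ} (π : Equiv.Perm (Fin n)) : ℕ := (descentSet π).card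

/-- The number of descents of `π` at odd (1-based) positions, i.e. even 0-based indices. -/
def odes {n : ℕ} (π : Equiv.Perm (Fin n)) : ℕ :=
  ((descentSet π).filter (fun i => Even i)).card

/-- The number of descents of `π` at even (1-based) positions, i.e. odd 0-based indices. -/
def edes {n : ℕ} (π : Equiv.Perm (Fin n)) : ℕ :=
  ((descentSet π).filter (fun i => Odd i)).card

/-- The refined Eulerian polynomial `A_n(p,q) = Σ_π p^{odes π} q^{edes π}`. -/
def refinedEulerian (n : ℕ) (p q : ℝ) : ℝ :=
  ∑ π : Equiv.Perm (Fin n), p ^ odes π * q ^ edes π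

/-- The Eulerian polynomial `A_n(q) = Σ_π q^{des π}` as a function. -/
def eulerianEval (n : ℕ) (q : ℝ) : ℝ :=
  ∑ π : Equiv.Perm (Fin n), q ^ des π

/-- The Eulerian polynomial `A_n(q)` as a polynomial. -/
noncomputable def eulerianPolynomial (n : ℕ) : Polynomial ℝ :=
  ∑ π : Equiv.Perm (Fin n), Polynomial.X ^ des π

/-- The Eulerian number `A_{n,k}`: the number of permutations of `[n]` with `k` descents. -/
def eulerianNumber (n k : ℕ) : ℕ :=
  (Finset.univ.filter (fun π : Equiv.Perm (Fin n) => des π = k)).card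

/-- A permutation `a_1 a_2 … a_n` is alternating if `a_1 > a_2 < a_3 > ⋯`. -/
def IsAlternating {n : ℕ} (π : Equiv.Perm (Fin n)) : Prop :=
  ∀ i : ℕ, ∀ h : i + 1 < n,
    (π ⟨i + 1, h⟩ < π ⟨i, Nat.lt_of_succ_lt h⟩ ↔ Even i)

open scoped Classical in
/-- The Euler number `E_n`: the number of alternating permutations of `[n]`. -/
noncomputable def eulerNumber (n : ℕ) : ℕ :=
  (Finset.univ.filter (fun π : Equiv.Perm (Fin n) => IsAlternating π)).card

/-- `a_{n,k}`: the number of permutations of `[n]` with `k` even descents and no odd descents. -/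
def aNum (n k : ℕ) : ℕ :=
  (Finset.univ.filter (fun π : Equiv.Perm (Fin n) => edes π = k ∧ odes π = 0)).card

/-- The weight of a permutation in which a descent at the (0-based) index `i` has weight `w i`. -/
def descentWeight {K : Type*} [CommRing K] (w : ℕ → K) {n : ℕ} (π : Equiv.Perm (Fin n)) : K :=
  ∏ i ∈ descentSet π, w i

/-- The total descent weight of all permutations of `Fin n`. -/
def descentSum {K : Type*} [CommRing K] (w : ℕ → K) (n : ℕ) : K :=
  ∑ π : Equiv.Perm (Fin n), descentWeight w π

/-- Append the value `k` to the one-line notation of `σ`, shifting the values `≥ k` up by one. -/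
def appendValue {m : ℕ} (k : Fin (m + 1)) (σ : Equiv.Perm (Fin m)) : Equiv.Perm (Fin (m + 1)) :=
  ((finSuccEquiv' (Fin.last m)).trans (Equiv.optionCongr σ)).trans (finSuccEquiv' k).symm

lemma appendValue_last {m : ℕ} (k : Fin (m + 1)) (σ : Equiv.Perm (Fin m)) :
    appendValue k σ (Fin.last m) = k := by
  simp [appendValue]

lemma appendValue_castSucc {m : ℕ} (k : Fin (m + 1)) (σ : Equiv.Perm (Fin m)) (i : Fin m) :
    appendValue k σ i.castSucc = k.succAbove (σ i) := by
  have : finSuccEquiv' (Fin.last m) i.castSucc = some i := by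
    rw [← Fin.succAbove_last_apply, finSuccEquiv'_succAbove]
  simp [appendValue, this]

lemma appendValue_bijective (m : ℕ) :
    Function.Bijective
      (fun x : Fin (m + 1) × Equiv.Perm (Fin m) => appendValue x.1 x.2) := by
  rw [Fintype.bijective_iff_injective_and_card]
  constructor
  · rintro ⟨k, σ⟩ ⟨l, τ⟩ h
    simp only at h
    have hk : k = l := by rw [← appendValue_last k σ, h, appendValue_last]
    subst hk
    congr 1
    ext i : 1
    apply Fin.succAbove_right_injective (p := k)
    rw [← appendValue_castSucc, h, appendValue_castSucc]
  · simp [Fintype.card_perm, Nat.factorial_succ]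

lemma mem_descentSet {n : ℕ} {π : Equiv.Perm (Fin n)} {i : ℕ} :
    i ∈ descentSet π ↔ ∃ h : i + 1 < n, π ⟨i + 1, h⟩ < π ⟨i, Nat.lt_of_succ_lt h⟩ := by
  simp only [descentSet, Finset.mem_filter, Finset.mem_range, and_iff_right_iff_imp]
  rintro ⟨h, -⟩
  omega

lemma descentSet_appendValue {m : ℕ} (k : Fin (m + 2)) (σ : Equiv.Perm (Fin (m + 1))) :
    descentSet (appendValue k σ) =
      if (k : ℕ) ≤ σ (Fin.last m) then insert m (descentSet σ) else descentSet σ := by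
  have hlast : m ∈ descentSet (appendValue k σ) ↔ (k : ℕ) ≤ σ (Fin.last m) := by
    rw [mem_descentSet]
    have h1 : (⟨m + 1, by omega⟩ : Fin (m + 2)) = Fin.last (m + 1) := rfl
    have h2 : (⟨m, by omega⟩ : Fin (m + 2)) = (Fin.last m).castSucc := rfl
    simp only [h1, h2, appendValue_last, appendValue_castSucc, Fin.lt_succAbove_iff_le_castSucc,
      Fin.le_def, Fin.val_castSucc]
    simp
  have hnot : m ∉ descentSet σ := by
    rw [mem_descentSet]
    rintro ⟨h, -⟩
    omega
  have hother : ∀ i, i ≠ m → (i ∈ descentSet (appendValue k σ) ↔ i ∈ descentSet σ) := by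
    intro i hi
    simp only [mem_descentSet]
    have key : ∀ h : i + 1 < m + 1,
        appendValue k σ ⟨i + 1, by omega⟩ < appendValue k σ ⟨i, by omega⟩ ↔
          σ ⟨i + 1, h⟩ < σ ⟨i, by omega⟩ := by
      intro h
      have h1 : (⟨i + 1, by omega⟩ : Fin (m + 2)) = (⟨i + 1, h⟩ : Fin (m + 1)).castSucc := rfl
      have h2 : (⟨i, by omega⟩ : Fin (m + 2)) = (⟨i, by omega⟩ : Fin (m + 1)).castSucc := rfl
      rw [h1, h2, appendValue_castSucc, appendValue_castSucc, Fin.succAbove_lt_succAbove_iff]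
    constructor
    · rintro ⟨h, hd⟩
      exact ⟨by omega, (key (by omega)).1 hd⟩
    · rintro ⟨h, hd⟩
      exact ⟨by omega, (key h).2 hd⟩
  ext i
  by_cases hi : i = m
  · subst hi
    rw [hlast]
    split_ifs with h <;> simp [h, hnot]
  · rw [hother i hi]
    split_ifs <;> simp [hi]

lemma descentWeight_appendValue {K : Type*} [CommRing K] (w : ℕ → K) {m : ℕ} (k : Fin (m + 2))
    (σ : Equiv.Perm (Fin (m + 1))) :
    descentWeight w (appendValue k σ) =
      descentWeight w σ * if (k : ℕ) ≤ σ (Fin.last m) then w m else 1 := by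
  have hnot : m ∉ descentSet σ := by
    rw [mem_descentSet]
    rintro ⟨h, -⟩
    omega
  rw [descentWeight, descentSet_appendValue]
  split_ifs
  · rw [Finset.prod_insert hnot, mul_comm, descentWeight]
  · rw [mul_one, descentWeight]

/-- For `k ≤ m`, the total descent weight of the permutations of `Fin (m + 1)` whose last value
is `k`; as a function of `k` it is a polynomial, which the definition extends to all `k`. -/
def lastValueSum {K : Type*} [CommRing K] (w : ℕ → K) : ℕ → ℕ → K
  | 0, _ => 1
  | m + 1, k => (1 - w m) * ∑ j ∈ range k, lastValueSum w m j +
      w m * ∑ j ∈ range (m + 1), lastValueSum w m j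

lemma sum_descentWeight_mul {K : Type*} [CommRing K] (w : ℕ → K) (m : ℕ) (φ : ℕ → K) :
    ∑ σ : Equiv.Perm (Fin (m + 1)), descentWeight w σ * φ (σ (Fin.last m)) =
      ∑ k ∈ range (m + 1), lastValueSum w m k * φ k := by
  induction m generalizing φ with
  | zero => simp [descentWeight, lastValueSum, descentSet]
  | succ m ih =>
    rw [← (appendValue_bijective (m + 1)).sum_comp, Fintype.sum_prod_type, ← Fin.sum_univ_eq_sum_range
      (fun k => lastValueSum w (m + 1) k * φ k)]
    refine Finset.sum_congr rfl fun k _ => ?_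
    simp only [appendValue_last, descentWeight_appendValue]
    rw [← Finset.sum_mul, ih (fun j => if (k : ℕ) ≤ j then w m else 1)]
    congr 1
    have hk : (k : ℕ) ≤ m + 1 := by omega
    rw [lastValueSum, ← Finset.sum_range_add_sum_Ico _ hk, ← Finset.sum_range_add_sum_Ico
      (fun j => lastValueSum w m j) hk]
    have h1 : ∑ j ∈ range (k : ℕ), lastValueSum w m j * (if (k : ℕ) ≤ j then w m else 1) =
        ∑ j ∈ range (k : ℕ), lastValueSum w m j := by
      refine Finset.sum_congr rfl fun j hj => ?_
      rw [if_neg (by simpa using hj), mul_one]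
    have h2 : ∑ j ∈ Ico (k : ℕ) (m + 1), lastValueSum w m j * (if (k : ℕ) ≤ j then w m else 1) =
        (∑ j ∈ Ico (k : ℕ) (m + 1), lastValueSum w m j) * w m := by
      rw [Finset.sum_mul]
      refine Finset.sum_congr rfl fun j hj => ?_
      rw [if_pos (Finset.mem_Ico.1 hj).1]
    rw [h1, h2]
    ring

lemma descentSum_succ {K : Type*} [CommRing K] (w : ℕ → K) (m : ℕ) :
    descentSum w (m + 1) = ∑ k ∈ range (m + 1), lastValueSum w m k := by
  simpa [descentSum] using sum_descentWeight_mul w m (fun _ => 1)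

/-- The total weight of permutations of `Fin n` with a descent forced right after index `n - 1`;
it is `1` for `n = 0`. -/
def closedDescentSum {K : Type*} [CommRing K] (w : ℕ → K) : ℕ → K
  | 0 => 1
  | n + 1 => w n * descentSum w (n + 1)

lemma sum_range_choose_succ {K : Type*} [CommRing K] (k i : ℕ) :
    ∑ j ∈ range k, (j.choose i : K) = k.choose (i + 1) := by
  induction k with
  | zero => simp
  | succ k ih => rw [Finset.sum_range_succ, ih, Nat.choose_succ_succ]; push_cast; ring

lemma lastValueSum_eq {K : Type*} [CommRing K] (w : ℕ → K) (m k : ℕ) :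
    lastValueSum w m k = ∑ i ∈ range (m + 1),
      (k.choose i : K) * ((∏ r ∈ range i, (1 - w (m - 1 - r))) * closedDescentSum w (m - i)) := by
  induction m generalizing k with
  | zero => simp [lastValueSum, closedDescentSum]
  | succ m ih =>
    rw [lastValueSum, ← descentSum_succ, Finset.sum_range_succ']
    congr 1
    · simp only [ih]
      rw [Finset.sum_comm, Finset.mul_sum]
      refine Finset.sum_congr rfl fun i _ => ?_
      rw [← Finset.sum_mul, sum_range_choose_succ, Finset.prod_range_succ']
      have h (r : ℕ) : m + 1 - 1 - (r + 1) = m - 1 - r := by omega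
      simp only [h, Nat.add_sub_add_right]
      simp only [Nat.add_sub_cancel, Nat.sub_zero]
      ring
    · simp [closedDescentSum]

lemma descentSum_succ_eq {K : Type*} [CommRing K] (w : ℕ → K) (m : ℕ) :
    descentSum w (m + 1) = ∑ i ∈ range (m + 1), ((m + 1).choose (i + 1) : K) *
      ((∏ r ∈ range i, (1 - w (m - 1 - r))) * closedDescentSum w (m - i)) := by
  rw [descentSum_succ]
  simp only [lastValueSum_eq]
  rw [Finset.sum_comm]
  refine Finset.sum_congr rfl fun i _ => ?_
  rw [← Finset.sum_mul, sum_range_choose_succ]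

/-- The weight `p` on odd and `q` on even (1-based) positions. -/
def alternatingWeight {K : Type*} (p q : K) (i : ℕ) : K := if Even i then p else q

lemma refinedEulerian_eq_descentSum (n : ℕ) (p q : ℝ) :
    refinedEulerian n p q = descentSum (alternatingWeight p q) n := by
  refine Finset.sum_congr rfl fun π _ => ?_
  simp only [descentWeight, alternatingWeight, Finset.prod_ite, Finset.prod_const, odes, edes,
    Nat.not_even_iff_odd]

lemma prod_one_sub_alternatingWeight {K : Type*} [CommRing K] (p q : K) {m i : ℕ} (hi : i ≤ m) :
    ∏ r ∈ range i, (1 - alternatingWeight p q (m - 1 - r)) =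
      (if Even i then 1 else if Even m then 1 - q else 1 - p) * ((1 - p) * (1 - q)) ^ (i / 2) := by
  induction i with
  | zero => simp
  | succ i ih =>
    rw [Finset.prod_range_succ, ih (by omega)]
    rcases Nat.even_or_odd' i with ⟨a, rfl | rfl⟩ <;> rcases Nat.even_or_odd' m with ⟨b, rfl | rfl⟩
    · have h1 : ¬ Even (2 * b - 1 - 2 * a) := by rw [Nat.even_iff]; omega
      have h2 : (2 * a + 1) / 2 = a := by omega
      have h3 : ¬ Even (2 * a + 1) := by simp
      have h4 : Even (2 * b) := by simp
      simp only [alternatingWeight, h1, h2, h3, h4]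
      simp [mul_comm]
    · have h1 : Even (2 * b + 1 - 1 - 2 * a) := by rw [Nat.even_iff]; omega
      have h2 : (2 * a + 1) / 2 = a := by omega
      have h3 : ¬ Even (2 * a + 1) := by simp
      have h4 : ¬ Even (2 * b + 1) := by simp
      simp only [alternatingWeight, h1, h2, h3, h4]
      simp [mul_comm]
    · have h1 : Even (2 * b - 1 - (2 * a + 1)) := by rw [Nat.even_iff]; omega
      have h2 : (2 * a + 1) / 2 = a := by omega
      have h3 : (2 * a + 1 + 1) / 2 = a + 1 := by omega
      have h4 : Even (2 * a + 1 + 1) := by rw [Nat.even_iff]; omega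
      simp [alternatingWeight, h1, h2, h3, h4]
      ring
    · have h1 : ¬ Even (2 * b + 1 - 1 - (2 * a + 1)) := by rw [Nat.even_iff]; omega
      have h2 : (2 * a + 1) / 2 = a := by omega
      have h3 : (2 * a + 1 + 1) / 2 = a + 1 := by omega
      have h4 : Even (2 * a + 1 + 1) := by rw [Nat.even_iff]; omega
      simp only [alternatingWeight, h1, h2, h3, h4]
      simp
      ring

section Series

open PowerSeries

variable {K : Type*} [Field K]

/-- The series `(cosh (√H t) - 1) / H`. -/
def coshSeries (H : K) : PowerSeries K :=
  PowerSeries.mk fun n => if Even n ∧ n ≠ 0 then H ^ (n / 2 - 1) / (n.factorial : K) else 0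

/-- The series `sinh (√H t) / √H`. -/
def sinhSeries (H : K) : PowerSeries K :=
  PowerSeries.mk fun n => if Even n then 0 else H ^ (n / 2) / (n.factorial : K)

/-- The even part, without constant term, of the exponential generating function of the refined
Eulerian polynomials. -/
def evenSeries (p q : K) : PowerSeries K :=
  PowerSeries.mk fun n => if Even n ∧ n ≠ 0 then
    descentSum (alternatingWeight p q) n / (n.factorial : K) else 0

/-- The odd part of the exponential generating function of the refined Eulerian polynomials. -/
def oddSeries (p q : K) : PowerSeries K :=
  PowerSeries.mk fun n => if Even n then 0 else
    descentSum (alternatingWeight p q) n / (n.factorial : K)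

lemma constantCoeff_coshSeries (H : K) : constantCoeff (coshSeries H) = 0 := by
  rw [← PowerSeries.coeff_zero_eq_constantCoeff_apply, coshSeries, coeff_mk]; simp

lemma constantCoeff_sinhSeries (H : K) : constantCoeff (sinhSeries H) = 0 := by
  rw [← PowerSeries.coeff_zero_eq_constantCoeff_apply, sinhSeries, coeff_mk]; simp

lemma constantCoeff_evenSeries (p q : K) : constantCoeff (evenSeries p q) = 0 := by
  rw [← PowerSeries.coeff_zero_eq_constantCoeff_apply, evenSeries, coeff_mk]; simp

lemma constantCoeff_oddSeries (p q : K) : constantCoeff (oddSeries p q) = 0 := by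
  rw [← PowerSeries.coeff_zero_eq_constantCoeff_apply, oddSeries, coeff_mk]; simp

lemma derivative_coshSeries [CharZero K] (H : K) :
    derivative K (coshSeries H) = sinhSeries H := by
  ext n
  rw [PowerSeries.coeff_derivative, coshSeries, sinhSeries, coeff_mk, coeff_mk]
  rcases Nat.even_or_odd' n with ⟨a, rfl | rfl⟩
  · simp
  · have h1 : Even (2 * a + 1 + 1) := by rw [Nat.even_iff]; omega
    have h2 : (2 * a + 1 + 1) / 2 - 1 = a := by omega
    have h3 : (2 * a + 1) / 2 = a := by omega
    have h4 : (((2 * a + 1 : ℕ) : K) + 1) ≠ 0 := Nat.cast_add_one_ne_zero _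
    have h5 : ((2 * a + 1).factorial : K) ≠ 0 := by exact_mod_cast Nat.factorial_ne_zero _
    rw [if_pos ⟨h1, by omega⟩, if_neg (by simp), h2, h3, Nat.factorial_succ (2 * a + 1),
      Nat.cast_mul, Nat.cast_succ]
    field_simp

lemma derivative_sinhSeries [CharZero K] (H : K) :
    derivative K (sinhSeries H) = 1 + C H * coshSeries H := by
  ext n
  rw [PowerSeries.coeff_derivative, map_add, coeff_C_mul, coshSeries, sinhSeries, coeff_mk,
    coeff_mk, coeff_one]
  rcases Nat.even_or_odd' n with ⟨a, rfl | rfl⟩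
  · have h3 : (2 * a + 1) / 2 = a := by omega
    have h4 : (((2 * a : ℕ) : K) + 1) ≠ 0 := Nat.cast_add_one_ne_zero _
    have h5 : ((2 * a).factorial : K) ≠ 0 := by exact_mod_cast Nat.factorial_ne_zero _
    rw [if_neg (by simp), h3, Nat.factorial_succ, Nat.cast_mul, Nat.cast_succ]
    rcases a with _ | a
    · simp
    · have h6 : 2 * (a + 1) / 2 - 1 = a := by omega
      rw [if_neg (by omega), if_pos ⟨by simp, by omega⟩, h6]
      field_simp
      ring
  · have h1 : Even (2 * a + 1 + 1) := by rw [Nat.even_iff]; omega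
    simp [h1]

lemma sinhSeries_sq [CharZero K] (H : K) :
    sinhSeries H ^ 2 = 2 * coshSeries H + C H * coshSeries H ^ 2 := by
  apply PowerSeries.derivative.ext
  · have h2 : derivative K (2 : PowerSeries K) = 0 := by
      simpa using (derivative K).map_natCast 2
    have hC : derivative K (C H) = 0 := derivative_C
    simp only [map_add, Derivation.leibniz, Derivation.leibniz_pow, derivative_coshSeries,
      derivative_sinhSeries, h2, hC, smul_eq_mul]
    simp
    ring
  · simp [constantCoeff_sinhSeries, constantCoeff_coshSeries]

lemma descentSum_div_factorial [CharZero K] (w : ℕ → K) {n : ℕ} (hn : n ≠ 0) :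
    descentSum w n / (n.factorial : K) = ∑ x ∈ antidiagonal n, (if x.1 = 0 then 0 else
      ((∏ r ∈ range (x.1 - 1), (1 - w (n - 1 - 1 - r))) / (x.1.factorial : K)) *
        (closedDescentSum w x.2 / (x.2.factorial : K))) := by
  obtain ⟨m, rfl⟩ := Nat.exists_eq_succ_of_ne_zero hn
  rw [Finset.Nat.antidiagonal_succ, Finset.sum_cons, Finset.sum_map,
    Finset.Nat.sum_antidiagonal_eq_sum_range_succ_mk, descentSum_succ_eq, Finset.sum_div]
  simp only [if_true, zero_add]
  refine Finset.sum_congr rfl fun i hi => ?_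
  have hi : i ≤ m := by simpa [Nat.lt_succ_iff] using hi
  have hc := Nat.choose_mul_factorial_mul_factorial (show i + 1 ≤ m + 1 by omega)
  rw [Nat.add_sub_add_right] at hc
  have hc : ((m + 1).choose (i + 1) : K) * ((i + 1).factorial : K) * ((m - i).factorial : K) =
    ((m + 1).factorial : K) := by exact_mod_cast hc
  have h1 : ((i + 1).factorial : K) ≠ 0 := by exact_mod_cast Nat.factorial_ne_zero _
  have h2 : ((m - i).factorial : K) ≠ 0 := by exact_mod_cast Nat.factorial_ne_zero _
  have h3 : ((m + 1).factorial : K) ≠ 0 := by exact_mod_cast Nat.factorial_ne_zero _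
  simp
  field_simp
  rw [← hc]
  ring

lemma closedDescentSum_alternatingWeight (p q : K) (n : ℕ) :
    closedDescentSum (alternatingWeight p q) n / (n.factorial : K) =
      coeff n (C p * oddSeries p q + (1 + C q * evenSeries p q)) := by
  rcases n with _ | n
  · simp [closedDescentSum, constantCoeff_oddSeries, constantCoeff_evenSeries]
  · simp only [map_add, coeff_C_mul, oddSeries, evenSeries, coeff_mk, coeff_one, closedDescentSum,
      alternatingWeight]
    rcases Nat.even_or_odd n with h | h
    · have h' : ¬ Even (n + 1) := by simpa [Nat.even_add_one] using h
      simp [h, h', mul_div_assoc]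
    · have h' : Even (n + 1) := by simpa [Nat.even_add_one] using h
      simp [Nat.not_even_iff_odd.2 h, h', mul_div_assoc]

lemma coeff_mul_eq_zero_of_parity {f g : PowerSeries K} {a b n : ℕ}
    (hf : ∀ x, ¬ Even (x + a) → coeff x f = 0) (hg : ∀ y, ¬ Even (y + b) → coeff y g = 0)
    (hn : ¬ Even (n + (a + b))) : coeff n (f * g) = 0 := by
  rw [coeff_mul]
  refine Finset.sum_eq_zero fun x hx => ?_
  obtain rfl := mem_antidiagonal.1 hx
  by_cases h1 : Even (x.1 + a)
  · rw [hg, mul_zero]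
    intro h2
    exact hn (by simpa [add_add_add_comm] using h1.add h2)
  · rw [hf _ h1, zero_mul]

lemma coeff_coshSeries_of_not_even (H : K) (n : ℕ) (hn : ¬ Even (n + 0)) :
    coeff n (coshSeries H) = 0 := by
  rw [coshSeries, coeff_mk, if_neg (fun h => hn h.1)]

lemma coeff_sinhSeries_of_not_odd (H : K) (n : ℕ) (hn : ¬ Even (n + 1)) :
    coeff n (sinhSeries H) = 0 := by
  rw [sinhSeries, coeff_mk, if_pos (by simpa [Nat.even_add_one] using hn)]

lemma coeff_C_mul_oddSeries_of_not_odd (p q : K) (n : ℕ) (hn : ¬ Even (n + 1)) :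
    coeff n (C p * oddSeries p q) = 0 := by
  rw [coeff_C_mul, oddSeries, coeff_mk, if_pos (by simpa [Nat.even_add_one] using hn), mul_zero]

lemma coeff_one_add_evenSeries_of_not_even (p q : K) (n : ℕ) (hn : ¬ Even (n + 0)) :
    coeff n (1 + C q * evenSeries p q) = 0 := by
  have h0 : n ≠ 0 := by rintro rfl; simp at hn
  rw [map_add, coeff_one, if_neg h0, coeff_C_mul, evenSeries, coeff_mk,
    if_neg (fun h => hn h.1), mul_zero, zero_add]

lemma descentSum_alternatingWeight_div_factorial [CharZero K] (p q : K) {n : ℕ} (hn : n ≠ 0) :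
    descentSum (alternatingWeight p q) n / (n.factorial : K) =
      coeff n ((sinhSeries ((1 - p) * (1 - q)) +
        C (if Even n then 1 - p else 1 - q) * coshSeries ((1 - p) * (1 - q))) *
          (C p * oddSeries p q + (1 + C q * evenSeries p q))) := by
  rw [descentSum_div_factorial _ hn, coeff_mul]
  refine Finset.sum_congr rfl fun ⟨i, y⟩ hx => ?_
  have hx : i + y = n := mem_antidiagonal.1 hx
  rw [closedDescentSum_alternatingWeight]
  rcases i with _ | i
  · simp [constantCoeff_sinhSeries, constantCoeff_coshSeries]
  have hpar : Even (n - 1) ↔ ¬ Even n := by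
    obtain ⟨m, rfl⟩ := Nat.exists_eq_succ_of_ne_zero hn
    simp [Nat.even_add_one]
  simp only [Nat.add_one_ne_zero, if_false]
  congr 1
  rw [map_add, coeff_C_mul, sinhSeries, coshSeries, coeff_mk, coeff_mk,
    prod_one_sub_alternatingWeight _ _ (by omega)]
  simp only [hpar, ite_not, Nat.add_sub_cancel]
  rcases Nat.even_or_odd' i with ⟨a, rfl | rfl⟩
  · have h1 : ¬ Even (2 * a + 1) := by simp
    have h2 : (2 * a + 1) / 2 = a := by omega
    simp only [h1, h2]
    simp
  · have h1 : Even (2 * a + 1 + 1) := by rw [Nat.even_iff]; omega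
    have h2 : (2 * a + 1 + 1) / 2 - 1 = a := by omega
    have h3 : (2 * a + 1) / 2 = a := by omega
    have h4 : ¬ Even (2 * a + 1) := by simp
    simp only [h1, h2, h3, h4]
    by_cases hn : Even n <;> simp [hn, mul_div_assoc]

lemma evenSeries_eq [CharZero K] (p q : K) :
    evenSeries p q = sinhSeries ((1 - p) * (1 - q)) * (C p * oddSeries p q) +
      C (1 - p) * (coshSeries ((1 - p) * (1 - q)) * (1 + C q * evenSeries p q)) := by
  ext n
  have hS := coeff_sinhSeries_of_not_odd ((1 - p) * (1 - q))
  have hD := coeff_coshSeries_of_not_even ((1 - p) * (1 - q))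
  have ho := coeff_C_mul_oddSeries_of_not_odd p q
  have hg := coeff_one_add_evenSeries_of_not_even p q
  by_cases hn : Even n
  · by_cases h0 : n = 0
    · simp [h0, constantCoeff_sinhSeries, constantCoeff_coshSeries, constantCoeff_evenSeries]
    have h1 := coeff_mul_eq_zero_of_parity (n := n) hS hg (by simpa [Nat.even_add_one] using hn)
    have h2 := coeff_mul_eq_zero_of_parity (n := n) hD ho (by simpa [Nat.even_add_one] using hn)
    conv_lhs => rw [evenSeries, coeff_mk, if_pos ⟨hn, h0⟩,
      descentSum_alternatingWeight_div_factorial p q h0, if_pos hn, add_mul, mul_add, mul_assoc,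
      mul_add (coshSeries _), map_add, map_add, coeff_C_mul, map_add, h1, h2]
    rw [map_add, coeff_C_mul]
    ring
  · have h1 := coeff_mul_eq_zero_of_parity (n := n) hS ho (by simpa [Nat.even_add] using hn)
    have h2 := coeff_mul_eq_zero_of_parity (n := n) hD hg (by simpa using hn)
    rw [map_add, coeff_C_mul, h1, h2, evenSeries, coeff_mk, if_neg (fun h => hn h.1)]
    ring

lemma oddSeries_eq [CharZero K] (p q : K) :
    oddSeries p q = sinhSeries ((1 - p) * (1 - q)) * (1 + C q * evenSeries p q) +
      C (1 - q) * (coshSeries ((1 - p) * (1 - q)) * (C p * oddSeries p q)) := by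
  ext n
  have hS := coeff_sinhSeries_of_not_odd ((1 - p) * (1 - q))
  have hD := coeff_coshSeries_of_not_even ((1 - p) * (1 - q))
  have ho := coeff_C_mul_oddSeries_of_not_odd p q
  have hg := coeff_one_add_evenSeries_of_not_even p q
  by_cases hn : Even n
  · have h1 := coeff_mul_eq_zero_of_parity (n := n) hS hg (by simpa [Nat.even_add_one] using hn)
    have h2 := coeff_mul_eq_zero_of_parity (n := n) hD ho (by simpa [Nat.even_add_one] using hn)
    rw [map_add, coeff_C_mul, h1, h2, oddSeries, coeff_mk, if_pos hn]
    ring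
  · have h0 : n ≠ 0 := by rintro rfl; simp at hn
    have h1 := coeff_mul_eq_zero_of_parity (n := n) hS ho (by simpa [Nat.even_add] using hn)
    have h2 := coeff_mul_eq_zero_of_parity (n := n) hD hg (by simpa using hn)
    conv_lhs => rw [oddSeries, coeff_mk, if_neg hn,
      descentSum_alternatingWeight_div_factorial p q h0, if_neg hn, add_mul, mul_add, mul_assoc,
      mul_add (coshSeries _), map_add, map_add, coeff_C_mul, map_add, h1, h2]
    rw [map_add, coeff_C_mul]
    ring

lemma one_sub_mul_evenSeries [CharZero K] (p q : K) :
    (1 - C (p + q) * coshSeries ((1 - p) * (1 - q))) * evenSeries p q =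
      C (1 + p) * coshSeries ((1 - p) * (1 - q)) := by
  have h1 := evenSeries_eq p q
  have h2 := oddSeries_eq p q
  have h3 := sinhSeries_sq ((1 - p) * (1 - q))
  generalize sinhSeries ((1 - p) * (1 - q)) = S at *
  generalize coshSeries ((1 - p) * (1 - q)) = D at *
  generalize evenSeries p q = g at *
  generalize oddSeries p q = o at *
  simp only [map_add, map_sub, map_mul, map_one] at *
  generalize (C p : PowerSeries K) = p at *
  generalize (C q : PowerSeries K) = q at *
  linear_combination (1 - (1 - q) * p * D) * h1 + p * S * h2 + (p * q * g + p) * h3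

lemma rescale_coshSeries {H w : K} :
    rescale w (coshSeries H) = C (w ^ 2) * coshSeries (w ^ 2 * H) := by
  ext n
  rw [coeff_rescale, coeff_C_mul, coshSeries, coshSeries, coeff_mk, coeff_mk]
  split_ifs with h
  · obtain ⟨⟨a, rfl⟩, h0⟩ := h
    obtain ⟨b, rfl⟩ := Nat.exists_eq_succ_of_ne_zero (show a ≠ 0 by omega)
    have : (b.succ + b.succ) / 2 - 1 = b := by omega
    rw [this, mul_pow, ← pow_mul, Nat.succ_eq_add_one]
    ring
  · simp

lemma evenSeries_rescale [CharZero K] {p q w : K} (hw : w ^ 2 = 1 + p * q)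
    (h : 1 + p * q ≠ 0) :
    C (1 + p * q) * evenSeries p q =
      C (1 + p) * rescale w (evenSeries 0 ((p + q) / (1 + p * q))) := by
  have h1 := one_sub_mul_evenSeries p q
  have h2 := congrArg (rescale w) (one_sub_mul_evenSeries 0 ((p + q) / (1 + p * q)))
  have hH : w ^ 2 * ((1 - 0) * (1 - (p + q) / (1 + p * q))) = (1 - p) * (1 - q) := by
    rw [hw]; field_simp; ring
  have hC : C ((p + q) / (1 + p * q)) * C (1 + p * q) = C (p + q) := by
    rw [← map_mul, div_mul_cancel₀ _ h]
  have hr : ∀ a : K, rescale w (C a) = C a := fun a => by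
    ext n
    rw [coeff_rescale, coeff_C]
    split_ifs with hn <;> simp [hn]
  simp only [map_mul, map_sub, map_one, rescale_coshSeries, hH, hr, zero_add, add_zero] at h2
  rw [hw] at h2
  have hne : (1 - C (p + q) * coshSeries ((1 - p) * (1 - q)) : PowerSeries K) ≠ 0 := by
    intro h0
    have := congrArg constantCoeff h0
    simp [constantCoeff_coshSeries] at this
  apply mul_left_cancel₀ hne
  rw [← hC] at h1 ⊢
  linear_combination C (1 + p * q) * h1 - C (1 + p) * h2

lemma descentSum_even_reduction [CharZero K] {p q w : K} (hw : w ^ 2 = 1 + p * q)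
    (h : 1 + p * q ≠ 0) (n : ℕ) :
    descentSum (alternatingWeight p q) (2 * n + 2) = (1 + p) * (1 + p * q) ^ n *
      descentSum (alternatingWeight 0 ((p + q) / (1 + p * q))) (2 * n + 2) := by
  have := congrArg (coeff (2 * n + 2)) (evenSeries_rescale hw h)
  rw [coeff_C_mul, coeff_C_mul, coeff_rescale, evenSeries, evenSeries, coeff_mk, coeff_mk,
    if_pos ⟨by simp [parity_simps], by omega⟩, if_pos ⟨by simp [parity_simps], by omega⟩,
    show 2 * n + 2 = 2 * (n + 1) by ring, pow_mul, hw] at this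
  have h5 : ((2 * (n + 1)).factorial : K) ≠ 0 := by exact_mod_cast Nat.factorial_ne_zero _
  rw [show 2 * n + 2 = 2 * (n + 1) by ring]
  field_simp at this
  apply mul_left_cancel₀ h
  rw [pow_succ] at this
  linear_combination this

end Series

lemma ofReal_descentSum_alternatingWeight (p q : ℝ) (n : ℕ) :
    ((descentSum (alternatingWeight p q) n : ℝ) : ℂ) =
      descentSum (alternatingWeight (p : ℂ) (q : ℂ)) n := by
  simp only [descentSum, descentWeight, alternatingWeight]
  push_cast
  simp only [apply_ite Complex.ofReal]

/-- A_{2n+2}(p,q) = (1+p)(1+pq)^n A_{2n+2}(0, (p+q)/(1+pq)). -/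
theorem refinedEulerian_even_reduction (n : ℕ) (p q : ℝ) (h : 1 + p * q ≠ 0) :
    refinedEulerian (2 * n + 2) p q =
      (1 + p) * (1 + p * q) ^ n * refinedEulerian (2 * n + 2) 0 ((p + q) / (1 + p * q)) := by
  obtain ⟨w, hw⟩ := IsAlgClosed.exists_pow_nat_eq (1 + (p : ℂ) * q) two_pos
  have := descentSum_even_reduction hw (by exact_mod_cast h) n
  simp only [refinedEulerian_eq_descentSum]
  rw [← Complex.ofReal_inj]
  push_cast [ofReal_descentSum_alternatingWeight]
  exact this
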